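/- arXiv:2511.22162 — 3 statements merged into one kernel-verified Lean document; each statement's English description precedes it below -/
import Mathlib

section
/- Translation identity for linear magnetic potentials: let A : ℝ² → ℝ² be an ℝ-linear map, V : ℝ² → ℝ continuous, B ⊂ ℝ² a bounded open box and y ∈ ℝ². Then λ₁^{y+B}(A, V) = λ₁^{B}(A, V(y + ·)), where y + B = {y + x : x ∈ B} and V(y + ·) is the map x ↦ V(y + x). (The proof uses the unitary substitution u(x) = e^{-iA(y)·(x−y)} w(x−y).) -/
open Complex

/-- Partial derivative in direction `j` of a complex-valued function on `ℝ²`. -/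
noncomputable def pd (j : Fin 2) (f : (Fin 2 → ℝ) → ℂ) (x : Fin 2 → ℝ) : ℂ :=
  fderiv ℝ f x (Pi.single j 1)

/-- Partial derivative in direction `j` of a real-valued function on `ℝ²`. -/
noncomputable def pdR (j : Fin 2) (f : (Fin 2 → ℝ) → ℝ) (x : Fin 2 → ℝ) : ℝ :=
  fderiv ℝ f x (Pi.single j 1)

/-- The magnetic derivative `(i∂_j + A_j) w`. -/
noncomputable def magOp (A : (Fin 2 → ℝ) → Fin 2 → ℝ) (j : Fin 2)
    (w : (Fin 2 → ℝ) → ℂ) (x : Fin 2 → ℝ) : ℂ :=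
  Complex.I * pd j w x + (A x j : ℂ) * w x

/-- The magnetic Laplacian `(i∇ + A)² u = ∑_j (i∂_j + A_j)(i∂_j u + A_j u)`. -/
noncomputable def magLap (A : (Fin 2 → ℝ) → Fin 2 → ℝ) (u : (Fin 2 → ℝ) → ℂ)
    (x : Fin 2 → ℝ) : ℂ :=
  ∑ j : Fin 2, magOp A j (magOp A j u) x

open MeasureTheory

/-- Open box with corners `a`, `b`. -/
def boxIoo (a b : Fin 2 → ℝ) : Set (Fin 2 → ℝ) := {y | ∀ j, y j ∈ Set.Ioo (a j) (b j)}

/-- The open box `B_{c,L} = c + (−L/2, L/2)²`. -/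
def box (c : Fin 2 → ℝ) (L : ℝ) : Set (Fin 2 → ℝ) := {y | ∀ j, |y j - c j| < L / 2}

/-- `u` is a test function on `B`: smooth, compactly supported, with support in `B`. -/
def testFun (B : Set (Fin 2 → ℝ)) (u : (Fin 2 → ℝ) → ℂ) : Prop :=
  ContDiff ℝ (⊤ : ℕ∞) u ∧ HasCompactSupport u ∧ tsupport u ⊆ B

/-- The magnetic Schrödinger quadratic form
`Q(u) = ∫_B ( ∑_j |i∂_j u + A_j u|² + V|u|² )`. -/
noncomputable def qform (B : Set (Fin 2 → ℝ)) (A : (Fin 2 → ℝ) → Fin 2 → ℝ)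
    (V : (Fin 2 → ℝ) → ℝ) (u : (Fin 2 → ℝ) → ℂ) : ℝ :=
  ∫ x in B, ((∑ j : Fin 2, ‖Complex.I * pd j u x + (A x j : ℂ) * u x‖ ^ 2)
      + V x * ‖u x‖ ^ 2)

/-- The variational principal eigenvalue `λ₁^B(A, V)`. -/
noncomputable def lam1 (B : Set (Fin 2 → ℝ)) (A : (Fin 2 → ℝ) → Fin 2 → ℝ)
    (V : (Fin 2 → ℝ) → ℝ) : ℝ :=
  sInf { E | ∃ u, testFun B u ∧ (∫ x in B, ‖u x‖ ^ 2) = 1 ∧ E = qform B A V u }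

/-! Translating by `y` turns `A` into `A (y + ·)`, which for affine `A` differs from `A` by the
constant vector `c = A.linear y`. A constant is the gradient of `φ x = c ⬝ᵥ x`, and adding a
gradient to the potential does not change the eigenvalue: multiplication by `exp (iφ)` preserves
`‖u‖` and intertwines the two magnetic derivatives. -/

open scoped ContDiff

/-- Multiplication by the phase `exp (iφ)`: the gauge transformation of wave functions. It is
bundled as a bijection, with the gauge transformation by `-φ` as inverse, so that it can be used to
reparametrise the infimum in `lam1`. -/
noncomputable def gaugeTransform (φ : (Fin 2 → ℝ) → ℝ) :
    ((Fin 2 → ℝ) → ℂ) ≃ ((Fin 2 → ℝ) → ℂ) where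
  toFun u x := exp (φ x * I) * u x
  invFun u x := exp ((-φ) x * I) * u x
  left_inv u := by ext x; simp [← mul_assoc, ← exp_add]
  right_inv u := by ext x; simp [← mul_assoc, ← exp_add]

section Gauge

variable {φ : (Fin 2 → ℝ) → ℝ} {u : (Fin 2 → ℝ) → ℂ} {x : Fin 2 → ℝ}

lemma gaugeTransform_apply (φ : (Fin 2 → ℝ) → ℝ) (u : (Fin 2 → ℝ) → ℂ) (x : Fin 2 → ℝ) :
    gaugeTransform φ u x = exp (φ x * I) * u x :=
  rfl

lemma gaugeTransform_symm (φ : (Fin 2 → ℝ) → ℝ) :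
    (gaugeTransform φ).symm = gaugeTransform (-φ) :=
  Equiv.ext fun _ => rfl

lemma norm_gaugeTransform (φ : (Fin 2 → ℝ) → ℝ) (u : (Fin 2 → ℝ) → ℂ) (x : Fin 2 → ℝ) :
    ‖gaugeTransform φ u x‖ = ‖u x‖ := by
  rw [gaugeTransform_apply, norm_mul, norm_exp_ofReal_mul_I, one_mul]

lemma support_gaugeTransform (φ : (Fin 2 → ℝ) → ℝ) (u : (Fin 2 → ℝ) → ℂ) :
    Function.support (gaugeTransform φ u) = Function.support u := by
  ext x
  simp [gaugeTransform_apply]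

lemma tsupport_gaugeTransform (φ : (Fin 2 → ℝ) → ℝ) (u : (Fin 2 → ℝ) → ℂ) :
    tsupport (gaugeTransform φ u) = tsupport u := by
  rw [tsupport, support_gaugeTransform, tsupport]

lemma contDiff_gaugeTransform {n : ℕ∞ω} (hφ : ContDiff ℝ n φ) (hu : ContDiff ℝ n u) :
    ContDiff ℝ n (gaugeTransform φ u) :=
  ((ofRealCLM.contDiff.comp hφ).mul contDiff_const).cexp.mul hu

lemma contDiff_gaugeTransform_iff {n : ℕ∞ω} (hφ : ContDiff ℝ n φ) :
    ContDiff ℝ n (gaugeTransform φ u) ↔ ContDiff ℝ n u := by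
  refine ⟨fun h => ?_, contDiff_gaugeTransform hφ⟩
  rw [← (gaugeTransform φ).symm_apply_apply u, gaugeTransform_symm]
  exact contDiff_gaugeTransform hφ.neg h

lemma testFun_gaugeTransform_iff (hφ : ContDiff ℝ ∞ φ) {B : Set (Fin 2 → ℝ)} :
    testFun B (gaugeTransform φ u) ↔ testFun B u := by
  simp only [testFun, HasCompactSupport, tsupport_gaugeTransform, contDiff_gaugeTransform_iff hφ]

lemma pd_gaugeTransform (hφ : DifferentiableAt ℝ φ x) (hu : DifferentiableAt ℝ u x)
    (j : Fin 2) :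
    pd j (gaugeTransform φ u) x = exp (φ x * I) * (pd j u x + I * pdR j φ x * u x) := by
  have hphase : HasFDerivAt (fun z => exp (φ z * I))
      (exp (φ x * I) • I • ofRealCLM.comp (fderiv ℝ φ x)) x :=
    ((ofRealCLM.hasFDerivAt.comp x hφ.hasFDerivAt).mul_const I).cexp
  have hprod : HasFDerivAt (gaugeTransform φ u) _ x := hphase.mul hu.hasFDerivAt
  simp only [pd, pdR, hprod.fderiv, add_apply, smul_apply, ContinuousLinearMap.comp_apply,
    ofRealCLM_apply, smul_eq_mul]
  ring

lemma magOp_add_gradient_gaugeTransform (A : (Fin 2 → ℝ) → Fin 2 → ℝ)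
    (hφ : DifferentiableAt ℝ φ x) (hu : DifferentiableAt ℝ u x) (j : Fin 2) :
    magOp (fun z k => A z k + pdR k φ z) j (gaugeTransform φ u) x
      = exp (φ x * I) * magOp A j u x := by
  simp only [magOp, pd_gaugeTransform hφ hu, gaugeTransform_apply, ofReal_add]
  linear_combination exp (φ x * I) * pdR j φ x * u x * I_mul_I

lemma norm_magOp_add_gradient_gaugeTransform (A : (Fin 2 → ℝ) → Fin 2 → ℝ)
    (hφ : DifferentiableAt ℝ φ x) (hu : DifferentiableAt ℝ u x) (j : Fin 2) :
    ‖magOp (fun z k => A z k + pdR k φ z) j (gaugeTransform φ u) x‖ = ‖magOp A j u x‖ := by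
  rw [magOp_add_gradient_gaugeTransform A hφ hu, norm_mul, norm_exp_ofReal_mul_I, one_mul]

end Gauge

lemma qform_eq_integral_magOp (B : Set (Fin 2 → ℝ)) (A : (Fin 2 → ℝ) → Fin 2 → ℝ)
    (V : (Fin 2 → ℝ) → ℝ) (u : (Fin 2 → ℝ) → ℂ) :
    qform B A V u = ∫ x in B, ((∑ j, ‖magOp A j u x‖ ^ 2) + V x * ‖u x‖ ^ 2) :=
  rfl

lemma qform_add_gradient_gaugeTransform (B : Set (Fin 2 → ℝ)) (A : (Fin 2 → ℝ) → Fin 2 → ℝ)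
    (V : (Fin 2 → ℝ) → ℝ) {φ : (Fin 2 → ℝ) → ℝ} {u : (Fin 2 → ℝ) → ℂ}
    (hφ : Differentiable ℝ φ) (hu : Differentiable ℝ u) :
    qform B (fun x j => A x j + pdR j φ x) V (gaugeTransform φ u) = qform B A V u := by
  simp only [qform_eq_integral_magOp, norm_gaugeTransform,
    norm_magOp_add_gradient_gaugeTransform A (hφ _) (hu _)]

lemma lam1_eq_of_surjective {B B' : Set (Fin 2 → ℝ)} {A A' : (Fin 2 → ℝ) → Fin 2 → ℝ}
    {V V' : (Fin 2 → ℝ) → ℝ} {T : ((Fin 2 → ℝ) → ℂ) → (Fin 2 → ℝ) → ℂ}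
    (hT : Function.Surjective T)
    (htest : ∀ u, testFun B' (T u) ↔ testFun B u)
    (hnorm : ∀ u, testFun B u → ∫ x in B', ‖T u x‖ ^ 2 = ∫ x in B, ‖u x‖ ^ 2)
    (hqform : ∀ u, testFun B u → qform B' A' V' (T u) = qform B A V u) :
    lam1 B' A' V' = lam1 B A V := by
  unfold lam1
  congr 1
  ext E
  refine hT.exists.trans (exists_congr fun u => ?_)
  rw [htest]
  exact and_congr_right fun hu => by rw [hnorm u hu, hqform u hu]

theorem lam1_add_gradient (B : Set (Fin 2 → ℝ)) (A : (Fin 2 → ℝ) → Fin 2 → ℝ)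
    (V : (Fin 2 → ℝ) → ℝ) {φ : (Fin 2 → ℝ) → ℝ} (hφ : ContDiff ℝ ∞ φ) :
    lam1 B (fun x j => A x j + pdR j φ x) V = lam1 B A V :=
  lam1_eq_of_surjective (gaugeTransform φ).surjective (fun _ => testFun_gaugeTransform_iff hφ)
    (fun u _ => by simp only [norm_gaugeTransform])
    (fun _ hu => qform_add_gradient_gaugeTransform B A V (hφ.differentiable (by simp))
      (hu.1.differentiable (by simp)))

lemma contDiff_comp_const_add_iff {E F : Type*} [NormedAddCommGroup E] [NormedSpace ℝ E]
    [NormedAddCommGroup F] [NormedSpace ℝ F] {n : ℕ∞ω} {u : E → F} (y : E) :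
    ContDiff ℝ n (fun x => u (y + x)) ↔ ContDiff ℝ n u := by
  refine ⟨fun h => ?_, fun h => h.comp (contDiff_const.add contDiff_id)⟩
  simpa [Function.comp_def] using h.comp (contDiff_const.add contDiff_id : ContDiff ℝ n (-y + ·))

lemma setIntegral_image_const_add {G F : Type*} [AddGroup G] [MeasurableSpace G]
    [MeasurableAdd G] [NormedAddCommGroup F] [NormedSpace ℝ F] (μ : Measure G)
    [μ.IsAddLeftInvariant] (y : G) (B : Set G) (f : G → F) :
    ∫ x in (fun x => y + x) '' B, f x ∂μ = ∫ x in B, f (y + x) ∂μ :=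
  (measurePreserving_add_left μ y).setIntegral_image_emb (measurableEmbedding_addLeft y) f B

section Translation

variable (y : Fin 2 → ℝ) (B : Set (Fin 2 → ℝ)) (A : (Fin 2 → ℝ) → Fin 2 → ℝ)
  (V : (Fin 2 → ℝ) → ℝ) (u : (Fin 2 → ℝ) → ℂ)

lemma testFun_comp_const_add_iff :
    testFun B (fun x => u (y + x)) ↔ testFun ((fun x => y + x) '' B) u := by
  have htsupport : tsupport (fun x => u (y + x)) = (y + ·) ⁻¹' tsupport u :=
    tsupport_comp_eq_preimage u (Homeomorph.addLeft y)
  have hcompact : HasCompactSupport (fun x => u (y + x)) ↔ HasCompactSupport u := by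
    rw [HasCompactSupport, HasCompactSupport, htsupport]
    exact (Homeomorph.addLeft y).isCompact_preimage
  have hsubset : tsupport (fun x => u (y + x)) ⊆ B ↔ tsupport u ⊆ (y + ·) '' B := by
    rw [htsupport, ← Set.image_subset_image_iff (add_right_injective y),
      Set.image_preimage_eq _ (AddGroup.addLeft_bijective y).surjective]
  rw [testFun, testFun, contDiff_comp_const_add_iff, hcompact, hsubset]

lemma magOp_comp_const_add (j : Fin 2) (x : Fin 2 → ℝ) :
    magOp (fun z => A (y + z)) j (fun z => u (y + z)) x = magOp A j u (y + x) := by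
  simp only [magOp, pd, fderiv_comp_add_left]

lemma qform_comp_const_add :
    qform B (fun x => A (y + x)) (fun x => V (y + x)) (fun x => u (y + x))
      = qform ((fun x => y + x) '' B) A V u := by
  simp only [qform_eq_integral_magOp, setIntegral_image_const_add, magOp_comp_const_add]

theorem lam1_image_const_add :
    lam1 ((fun x => y + x) '' B) A V = lam1 B (fun x => A (y + x)) (fun x => V (y + x)) :=
  (lam1_eq_of_surjective ((Equiv.addLeft y).symm.arrowCongr (Equiv.refl ℂ)).surjective
    (testFun_comp_const_add_iff y B)
    (fun u _ => (setIntegral_image_const_add volume y B (‖u ·‖ ^ 2)).symm)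
    (fun u _ => qform_comp_const_add y B A V u)).symm

end Translation

lemma contDiff_dotProduct_left {ι : Type*} [Fintype ι] {n : ℕ∞ω} (c : ι → ℝ) :
    ContDiff ℝ n (c ⬝ᵥ ·) :=
  (dotProductBilin ℝ ℝ c).toContinuousLinearMap.contDiff

lemma pdR_dotProduct_left (c x : Fin 2 → ℝ) (j : Fin 2) : pdR j (c ⬝ᵥ ·) x = c j := by
  have hderiv : HasFDerivAt (c ⬝ᵥ ·) (dotProductBilin ℝ ℝ c).toContinuousLinearMap x :=
    (dotProductBilin ℝ ℝ c).toContinuousLinearMap.hasFDerivAt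
  rw [pdR, hderiv.fderiv]
  exact dotProduct_single_one c j

theorem lam1_translation_linear_general (A : (Fin 2 → ℝ) →ᵃ[ℝ] (Fin 2 → ℝ))
    (V : (Fin 2 → ℝ) → ℝ) (B : Set (Fin 2 → ℝ)) (y : Fin 2 → ℝ) :
    lam1 ((fun x => y + x) '' B) (fun x => A x) V
      = lam1 B (fun x => A x) (fun x => V (y + x)) := by
  have htranslate : (fun x => A (y + x)) = fun x j => A x j + pdR j (A.linear y ⬝ᵥ ·) x := by
    ext x j
    rw [pdR_dotProduct_left, ← vadd_eq_add y x, A.map_vadd, vadd_eq_add, Pi.add_apply, add_comm]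
  rw [lam1_image_const_add, htranslate, lam1_add_gradient B _ _ (contDiff_dotProduct_left _)]

/-- Translation identity for linear magnetic potentials:
`λ₁^{y+B}(A, V) = λ₁^{B}(A, V(y + ·))` when `A` is ℝ-linear. -/
theorem lam1_translation_linear (A : (Fin 2 → ℝ) →ₗ[ℝ] (Fin 2 → ℝ))
    (V : (Fin 2 → ℝ) → ℝ) (hV : Continuous V)
    (a b : Fin 2 → ℝ) (hab : ∀ j, a j < b j) (y : Fin 2 → ℝ) :
    lam1 ((fun x => y + x) '' boxIoo a b) (fun x => A x) V
      = lam1 (boxIoo a b) (fun x => A x) (fun x => V (y + x)) :=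
  lam1_translation_linear_general A.toAffineMap V (boxIoo a b) y
end

section
/- Existence of a quadratic partition of unity adapted to boxes: there exists a constant K > 0 such that for every r > 0 there is a family (η_k)_{k∈ℤ²} of smooth functions ℝ² → [0,1] with the following properties: (i) the support of η_k is contained in the closed box \overline{B_{kr, 3r/2}}; (ii) ∑_{k∈ℤ²} η_k(x)² = 1 for every x ∈ ℝ² (a locally finite sum); (iii) ∑_{k∈ℤ²} |∇η_k(x)|² ≤ K/r² for every x ∈ ℝ². -/
open Complex

/-- The closed box `\overline{B_{c,L}}` of centre `c` and side `L`. -/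
def closedBox (c : Fin 2 → ℝ) (L : ℝ) : Set (Fin 2 → ℝ) := {y | ∀ j, |y j - c j| ≤ L / 2}

/-!
A difference of two shifted copies of a smooth transition function is a window whose integer
translates telescope to `1`; since at most two consecutive translates are nonzero at any point,
composing with `sin (π/2 * ·)` makes their squares sum to `1`. In several variables, sums over the
lattice of squared tensor products of such profiles factor into one-dimensional sums. In
`∑_k |∂_i η_k|²` every factor except the `i`-th is again `1`, so the gradient bound reduces to a
bound on the derivative of the profile, and rescaling by `r` contributes the factor `r⁻²`.
-/

open Function Set

/-- A smooth window equal to `1` on `[-1/4, 1/4]` and to `0` off `(-3/4, 3/4)`, whose integer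
translates form a linear partition of unity. -/
noncomputable def smoothWindow (t : ℝ) : ℝ :=
  Real.smoothTransition (2 * t + 3 / 2) - Real.smoothTransition (2 * t - 1 / 2)

/-- The one-dimensional profile whose squared integer translates sum to `1`, a factor of the
partition functions. -/
noncomputable def quadraticProfile (t : ℝ) : ℝ :=
  Real.sin (Real.pi / 2 * smoothWindow t)

theorem smoothWindow_mem_Icc (t : ℝ) : smoothWindow t ∈ Icc (0 : ℝ) 1 := by
  constructor
  · exact sub_nonneg.2 (Real.smoothTransition.monotone (by linarith))
  · exact (sub_le_self _ (Real.smoothTransition.nonneg _)).trans (Real.smoothTransition.le_one _)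

theorem contDiff_smoothWindow {n : ℕ∞} : ContDiff ℝ n smoothWindow :=
  (Real.smoothTransition.contDiff.comp (by fun_prop)).sub
    (Real.smoothTransition.contDiff.comp (by fun_prop))

theorem support_smoothWindow_subset : support smoothWindow ⊆ Metric.closedBall 0 (3 / 4) := by
  intro t
  contrapose
  rw [mem_closedBall_zero_iff, Real.norm_eq_abs, not_le, lt_abs, notMem_support, smoothWindow]
  rintro (ht | ht)
  · rw [Real.smoothTransition.one_of_one_le (by linarith),
      Real.smoothTransition.one_of_one_le (by linarith), sub_self]
  · rw [Real.smoothTransition.zero_of_nonpos (by linarith),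
      Real.smoothTransition.zero_of_nonpos (by linarith), sub_self]

theorem smoothWindow_add_smoothWindow_sub_one {t : ℝ} (ht : t ∈ Icc (0 : ℝ) 1) :
    smoothWindow t + smoothWindow (t - 1) = 1 := by
  obtain ⟨ht₀, ht₁⟩ := ht
  rw [smoothWindow, smoothWindow, show 2 * (t - 1) + 3 / 2 = 2 * t - 1 / 2 by ring,
    Real.smoothTransition.one_of_one_le (by linarith),
    Real.smoothTransition.zero_of_nonpos (x := 2 * (t - 1) - 1 / 2) (by linarith)]
  ring

theorem quadraticProfile_mem_Icc (t : ℝ) : quadraticProfile t ∈ Icc (0 : ℝ) 1 := by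
  obtain ⟨h₀, h₁⟩ := smoothWindow_mem_Icc t
  have hπ := Real.pi_pos
  exact ⟨Real.sin_nonneg_of_nonneg_of_le_pi (by positivity) (by nlinarith), Real.sin_le_one _⟩

theorem contDiff_quadraticProfile {n : ℕ∞} : ContDiff ℝ n quadraticProfile :=
  Real.contDiff_sin.comp (contDiff_const.mul contDiff_smoothWindow)

theorem tsupport_quadraticProfile_subset :
    tsupport quadraticProfile ⊆ Metric.closedBall 0 (3 / 4) := by
  refine closure_minimal (fun t ht => support_smoothWindow_subset fun hwindow => ht ?_)
    Metric.isClosed_closedBall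
  rw [quadraticProfile, hwindow, mul_zero, Real.sin_zero]

theorem quadraticProfile_sq_add_sq {t : ℝ} (ht : t ∈ Icc (0 : ℝ) 1) :
    quadraticProfile t ^ 2 + quadraticProfile (t - 1) ^ 2 = 1 := by
  rw [quadraticProfile, quadraticProfile,
    eq_sub_of_add_eq' (smoothWindow_add_smoothWindow_sub_one ht), mul_sub, mul_one,
    Real.sin_pi_div_two_sub, Real.sin_sq_add_cos_sq]

theorem exists_bound_deriv_quadraticProfile : ∃ C : ℝ, ∀ t, |deriv quadraticProfile t| ≤ C :=
  (contDiff_quadraticProfile.continuous_deriv (n := 1) le_rfl).bounded_above_of_compact_support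
    (HasCompactSupport.of_support_subset_isCompact (isCompact_closedBall _ _)
      ((subset_tsupport _).trans tsupport_quadraticProfile_subset)).deriv

theorem support_int_translate_subset {M : Type*} [Zero M] {f : ℝ → M}
    (hf : support f ⊆ Ioo (-1) 1) (t : ℝ) :
    support (fun n : ℤ => f (t - n)) ⊆ ({⌊t⌋, ⌊t⌋ + 1} : Finset ℤ) := by
  intro n hn
  obtain ⟨hlower, hupper⟩ := hf hn
  have hn_le : n < ⌊t⌋ + 2 := by
    have := Int.lt_floor_add_one t
    exact_mod_cast (by linarith : (n : ℝ) < ⌊t⌋ + 2)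
  have hle_n : ⌊t⌋ < n + 1 := by
    have := Int.floor_le t
    exact_mod_cast (by linarith : (⌊t⌋ : ℝ) < n + 1)
  simp only [Finset.coe_pair, mem_insert_iff, mem_singleton_iff]
  omega

section Lattice

variable {ι : Type*} [Fintype ι]

theorem hasSum_prod_of_support_subset {κ R : Type*} [CommSemiring R] [TopologicalSpace R]
    {g : ι → κ → R} {s : ι → Finset κ} (hg : ∀ j, support (g j) ⊆ s j) :
    HasSum (fun k : ι → κ => ∏ j, g j (k j)) (∏ j, ∑ n ∈ s j, g j n) := by
  classical
  rw [Finset.prod_univ_sum]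
  refine hasSum_sum_of_ne_finset_zero fun k hk => ?_
  obtain ⟨j, hj⟩ : ∃ j, k j ∉ s j := by simpa [Fintype.mem_piFinset] using hk
  exact Finset.prod_eq_zero (Finset.mem_univ j) (notMem_support.1 fun h => hj (hg j h))

theorem hasSum_prod_int_translates {R : Type*} [CommSemiring R] [TopologicalSpace R]
    {f : ι → ℝ → R} (hf : ∀ j, support (f j) ⊆ Ioo (-1) 1) (t : ι → ℝ) :
    HasSum (fun k : ι → ℤ => ∏ j, f j (t j - k j))
      (∏ j, (f j (Int.fract (t j)) + f j (Int.fract (t j) - 1))) := by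
  convert hasSum_prod_of_support_subset fun j => support_int_translate_subset (hf j) (t j) using 3
  rw [Finset.sum_pair (by simp), Int.cast_add, Int.cast_one, ← sub_sub, Int.self_sub_floor]

/-- The tensor product of one-variable functions `f j`, rescaled to the lattice `r ℤ^ι` and
translated to its point `r k`. One factor per coordinate is allowed so that the class is closed
under partial derivatives. -/
noncomputable def latticeTensor (r : ℝ) (f : ι → ℝ → ℝ) (k : ι → ℤ) (x : ι → ℝ) : ℝ :=
  ∏ j, f j (x j / r - k j)

variable {r : ℝ} {f : ι → ℝ → ℝ} {θ : ℝ → ℝ}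

theorem contDiff_latticeTensor {n : WithTop ℕ∞} (hf : ∀ j, ContDiff ℝ n (f j)) (k : ι → ℤ) :
    ContDiff ℝ n (latticeTensor r f k) :=
  contDiff_prod fun j _ => (hf j).comp (by fun_prop)

theorem latticeTensor_mem_Icc (hf : ∀ j t, f j t ∈ Icc (0 : ℝ) 1) (k : ι → ℤ) (x : ι → ℝ) :
    latticeTensor r f k x ∈ Icc (0 : ℝ) 1 :=
  ⟨Finset.prod_nonneg fun j _ => (hf j _).1,
    Finset.prod_le_one (fun j _ => (hf j _).1) fun j _ => (hf j _).2⟩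

theorem tsupport_latticeTensor_subset (hr : 0 < r) {a : ℝ} (ha : 0 ≤ a)
    (hf : ∀ j, support (f j) ⊆ Metric.closedBall 0 a) (k : ι → ℤ) :
    tsupport (latticeTensor r f k) ⊆ Metric.closedBall (fun j => k j * r) (a * r) := by
  refine closure_minimal (fun x hx => ?_) Metric.isClosed_closedBall
  refine (dist_pi_le_iff (by positivity)).2 fun j => ?_
  have hfactor : f j (x j / r - k j) ≠ 0 := Finset.prod_ne_zero_iff.1 hx j (Finset.mem_univ j)
  have hbound : |x j / r - k j| ≤ a := by simpa using hf j hfactor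
  calc dist (x j) (k j * r) = |(x j / r - k j) * r| := by
        rw [Real.dist_eq, sub_mul, div_mul_cancel₀ _ hr.ne']
    _ = |x j / r - k j| * r := by rw [abs_mul, abs_of_pos hr]
    _ ≤ a * r := by gcongr

theorem locallyFinite_closedBall_lattice (hr : 0 < r) (R : ℝ) :
    LocallyFinite fun k : ι → ℤ => Metric.closedBall (fun j => k j * r) R := by
  classical
  intro x
  refine ⟨Metric.ball x 1, Metric.ball_mem_nhds x one_pos,
    (finite_Icc (fun j => ⌈(x j - (R + 1)) / r⌉) fun j => ⌊(x j + (R + 1)) / r⌋).subset ?_⟩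
  rintro k ⟨y, hyk, hyx⟩
  have hdist (j : ι) : |x j - k j * r| ≤ R + 1 :=
    calc |x j - k j * r| ≤ dist x fun j => k j * r := dist_le_pi_dist x (fun j => k j * r) j
      _ ≤ dist y (fun j => k j * r) + dist y x := by
        rw [add_comm, dist_comm y x]; exact dist_triangle x y _
      _ ≤ R + 1 := add_le_add hyk (Metric.mem_ball.1 hyx).le
  refine ⟨fun j => Int.ceil_le.2 ((div_le_iff₀ hr).2 ?_),
    fun j => Int.le_floor.2 ((le_div_iff₀ hr).2 ?_)⟩ <;>
  linarith [abs_le.1 (hdist j)]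

theorem hasSum_latticeTensor_sq (hf : ∀ j, support (f j) ⊆ Ioo (-1) 1) (x : ι → ℝ) :
    HasSum (fun k => latticeTensor r f k x ^ 2)
      (∏ j, (f j (Int.fract (x j / r)) ^ 2 + f j (Int.fract (x j / r) - 1) ^ 2)) := by
  simp only [latticeTensor, ← Finset.prod_pow]
  exact hasSum_prod_int_translates (f := fun j t => f j t ^ 2)
    (fun j t ht => hf j (pow_ne_zero_iff two_ne_zero |>.1 ht)) fun j => x j / r

variable [DecidableEq ι]

theorem fderiv_latticeTensor_single (hf : ∀ j, Differentiable ℝ (f j)) (k : ι → ℤ) (x : ι → ℝ)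
    (i : ι) :
    fderiv ℝ (latticeTensor r f k) x (Pi.single i 1) =
      r⁻¹ * latticeTensor r (update f i (deriv (f i))) k x := by
  have hfactor (j : ι) : HasFDerivAt (fun y : ι → ℝ => f j (y j / r - k j))
      (deriv (f j) (x j / r - k j) • r⁻¹ •
        ContinuousLinearMap.proj (R := ℝ) (φ := fun _ => ℝ) j) x := by
    refine (hf j _).hasDerivAt.comp_hasFDerivAt x ?_
    simpa only [div_eq_inv_mul] using
      ((hasFDerivAt_apply (𝕜 := ℝ) j x).const_mul r⁻¹).sub_const (k j : ℝ)
  have htensor : HasFDerivAt (latticeTensor r f k) _ x :=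
    HasFDerivAt.finsetProd fun j (_ : j ∈ Finset.univ) => hfactor j
  rw [htensor.fderiv, latticeTensor, ← Finset.mul_prod_erase _ _ (Finset.mem_univ i)]
  have herase : ∏ j ∈ Finset.univ.erase i, update f i (deriv (f i)) j (x j / r - k j) =
      ∏ j ∈ Finset.univ.erase i, f j (x j / r - k j) :=
    Finset.prod_congr rfl fun j hj => by rw [update_of_ne (Finset.ne_of_mem_erase hj)]
  rw [herase, update_self]
  simp only [sum_apply, smul_apply, ContinuousLinearMap.proj_apply, Pi.single_apply, smul_eq_mul,
    mul_ite, mul_one, mul_zero, Finset.sum_ite_eq', Finset.mem_univ, ↓reduceIte]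
  ring

theorem hasSum_latticeTensor_gradient_sq (hθ : Differentiable ℝ θ)
    (hsupp : tsupport θ ⊆ Ioo (-1) 1)
    (hsq : ∀ t ∈ Icc (0 : ℝ) 1, θ t ^ 2 + θ (t - 1) ^ 2 = 1) (x : ι → ℝ) :
    HasSum (fun k => ∑ i, fderiv ℝ (latticeTensor r (fun _ => θ) k) x (Pi.single i 1) ^ 2)
      (∑ i, r⁻¹ ^ 2 * (deriv θ (Int.fract (x i / r)) ^ 2 +
        deriv θ (Int.fract (x i / r) - 1) ^ 2)) := by
  refine hasSum_sum fun i _ => ?_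
  have hsupport (j : ι) : support (update (fun _ => θ) i (deriv θ) j) ⊆ Ioo (-1) 1 := by
    rcases eq_or_ne j i with rfl | hji
    · rw [update_self]
      exact support_deriv_subset.trans hsupp
    · rw [update_of_ne hji]
      exact (subset_tsupport θ).trans hsupp
  have hfactor (j : ι) (hji : j ≠ i) :
      update (fun _ => θ) i (deriv θ) j (Int.fract (x j / r)) ^ 2 +
        update (fun _ => θ) i (deriv θ) j (Int.fract (x j / r) - 1) ^ 2 = 1 := by
    rw [update_of_ne hji]
    exact hsq _ ⟨Int.fract_nonneg _, (Int.fract_lt_one _).le⟩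
  have hsum := (hasSum_latticeTensor_sq (r := r) hsupport x).mul_left (r⁻¹ ^ 2)
  rw [Fintype.prod_eq_single i hfactor, update_self] at hsum
  simpa only [fderiv_latticeTensor_single (fun _ => hθ), mul_pow] using hsum

end Lattice

theorem exists_quadratic_partition_general (ι : Type*) [Fintype ι] [DecidableEq ι] :
    ∃ K > (0 : ℝ), ∀ r > (0 : ℝ), ∃ η : (ι → ℤ) → (ι → ℝ) → ℝ,
      (∀ k, ContDiff ℝ (⊤ : ℕ∞) (η k)) ∧
      (∀ k x, η k x ∈ Icc (0 : ℝ) 1) ∧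
      (∀ k, tsupport (η k) ⊆ Metric.closedBall (fun j => (k j : ℝ) * r) (3 / 4 * r)) ∧
      LocallyFinite (fun k => support (η k)) ∧
      (∀ x, ∑' k, η k x ^ 2 = 1) ∧
      (∀ x, ∑' k, ∑ j, fderiv ℝ (η k) x (Pi.single j 1) ^ 2 ≤ K / r ^ 2) := by
  obtain ⟨C, hC⟩ := exists_bound_deriv_quadraticProfile
  have hsupp : tsupport quadraticProfile ⊆ Ioo (-1) 1 :=
    tsupport_quadraticProfile_subset.trans fun t ht => by
      rw [Real.closedBall_eq_Icc] at ht
      exact ⟨by linarith [ht.1], by linarith [ht.2]⟩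
  refine ⟨Fintype.card ι * (2 * C ^ 2) + 1, by positivity, fun r hr => ?_⟩
  have hball := tsupport_latticeTensor_subset (ι := ι) hr (by norm_num)
    fun _ => (subset_tsupport _).trans tsupport_quadraticProfile_subset
  refine ⟨latticeTensor r fun _ => quadraticProfile,
    contDiff_latticeTensor fun _ => contDiff_quadraticProfile,
    latticeTensor_mem_Icc fun _ => quadraticProfile_mem_Icc, hball,
    (locallyFinite_closedBall_lattice hr _).subset fun k => (subset_tsupport _).trans (hball k),
    fun x => ?_, fun x => ?_⟩
  · rw [(hasSum_latticeTensor_sq (fun _ => (subset_tsupport _).trans hsupp) x).tsum_eq]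
    exact Finset.prod_eq_one fun j _ =>
      quadraticProfile_sq_add_sq ⟨Int.fract_nonneg _, (Int.fract_lt_one _).le⟩
  · rw [(hasSum_latticeTensor_gradient_sq (contDiff_quadraticProfile.differentiable one_ne_zero)
      hsupp (fun _ => quadraticProfile_sq_add_sq) x).tsum_eq]
    have hderiv (t : ℝ) : deriv quadraticProfile t ^ 2 ≤ C ^ 2 :=
      sq_le_sq.2 ((hC t).trans (le_abs_self C))
    calc _ ≤ ∑ _ : ι, r⁻¹ ^ 2 * (C ^ 2 + C ^ 2) :=
        Finset.sum_le_sum fun i _ =>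
          mul_le_mul_of_nonneg_left (add_le_add (hderiv _) (hderiv _)) (by positivity)
      _ = Fintype.card ι * (2 * C ^ 2) / r ^ 2 := by
        rw [Finset.sum_const, Finset.card_univ, nsmul_eq_mul]; ring
      _ ≤ (Fintype.card ι * (2 * C ^ 2) + 1) / r ^ 2 := by gcongr; linarith

theorem closedBox_eq_closedBall (c : Fin 2 → ℝ) {L : ℝ} (hL : 0 ≤ L) :
    closedBox c L = Metric.closedBall c (L / 2) := by
  ext y
  simp [closedBox, dist_pi_le_iff (div_nonneg hL zero_le_two), Real.dist_eq]

/-- Existence of a quadratic partition of unity adapted to boxes: there is a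
constant `K > 0` such that for every `r > 0` there is a smooth family
`(η_k)_{k ∈ ℤ²}` with values in `[0,1]`, `supp η_k ⊆ closure B_{kr, 3r/2}`,
locally finite supports, `∑_k η_k² = 1` and `∑_k |∇η_k|² ≤ K/r²`. -/
theorem exists_quadratic_partition :
    ∃ K > (0 : ℝ), ∀ r > (0 : ℝ), ∃ η : (Fin 2 → ℤ) → (Fin 2 → ℝ) → ℝ,
      (∀ k, ContDiff ℝ (⊤ : ℕ∞) (η k)) ∧
      (∀ k x, η k x ∈ Set.Icc (0 : ℝ) 1) ∧
      (∀ k, tsupport (η k) ⊆ closedBox (fun j => (k j : ℝ) * r) (3 * r / 2)) ∧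
      LocallyFinite (fun k => Function.support (η k)) ∧
      (∀ x, ∑' k, (η k x) ^ 2 = 1) ∧
      (∀ x, (∑' k, ∑ j : Fin 2, (pdR j (η k) x) ^ 2) ≤ K / r ^ 2) := by
  obtain ⟨K, hK, h⟩ := exists_quadratic_partition_general (Fin 2)
  refine ⟨K, hK, fun r hr => ?_⟩
  simpa only [pdR, closedBox_eq_closedBall _ (by positivity : 0 ≤ 3 * r / 2),
    show 3 * r / 2 / 2 = 3 / 4 * r by ring] using h r hr
end

section
/- Eigenvalue comparison between a large box and sub-boxes: there exists a constant K > 0 such that for every continuous A : ℝ² → ℝ², every continuous V : ℝ² → ℝ, every L ≥ 1 and every r ∈ (0, L), one has min_{k ∈ N₂(L,r)} λ₁^{B_{kr, 3r/2}}(A, V) − K/r² ≤ λ₁^{B_{0,L}}(A, V) ≤ min_{k ∈ N₁(L,r)} λ₁^{B_{kr, r}}(A, V), where N₁(L,r) = {k ∈ ℤ² : B_{kr, r} ⊆ B_{0,L}} and N₂(L,r) = {k ∈ ℤ² : B_{kr, 3r/2} ∩ B_{0,L} ≠ ∅}. -/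
open Complex

open MeasureTheory

open scoped Topology

/-!
The upper bound is monotonicity of `λ₁` in the domain: extension by zero turns test functions on a
sub-box into test functions on the big domain.

The lower bound is IMS localization. Choose smooth `χ_k`, supported in `B_{kr, 3r/2}`, with
`∑_k χ_k² = 1`. Differentiating this identity gives `∑_k χ_k ∂_j χ_k = 0`, so the cross terms cancel
in `∑_k Q(χ_k u) = Q(u) + ∫ (∑_k |∇χ_k|²) |u|²`. By scaling, the localization error
`∑_k |∇χ_k|²` is at most `K / r²`, while `Q(χ_k u) ≥ λ₁(B_{kr, 3r/2}) ‖χ_k u‖²` and the masses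
`‖χ_k u‖²` add up to `‖u‖²`.
-/

/-! ### A bump function whose squared integer translates sum to one -/

/-- A smooth angle equal to `0` on `(-∞, -7/10]` and to `π / 2` on `[-3/10, ∞)`. -/
noncomputable def cutoffAngle (t : ℝ) : ℝ :=
  Real.pi / 2 * Real.smoothTransition (5 / 2 * t + 7 / 4)

/-- The profile of the partition of unity: a smooth function supported in `[-7/10, 7/10]`. The
angles at `t` and `t - 1` never vary simultaneously, so its square telescopes over integer
translates. -/
noncomputable def bump (t : ℝ) : ℝ :=
  Real.cos (cutoffAngle (t - 1)) * Real.sin (cutoffAngle t)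

lemma cutoffAngle_of_le {t : ℝ} (ht : t ≤ -7 / 10) : cutoffAngle t = 0 := by
  rw [cutoffAngle, Real.smoothTransition.zero_of_nonpos (by linarith), mul_zero]

lemma cutoffAngle_of_ge {t : ℝ} (ht : -3 / 10 ≤ t) : cutoffAngle t = Real.pi / 2 := by
  rw [cutoffAngle, Real.smoothTransition.one_of_one_le (by linarith), mul_one]

lemma contDiff_cutoffAngle : ContDiff ℝ (⊤ : ℕ∞) cutoffAngle :=
  contDiff_const.mul (Real.smoothTransition.contDiff.comp (by fun_prop))

lemma contDiff_bump : ContDiff ℝ (⊤ : ℕ∞) bump :=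
  (Real.contDiff_cos.comp (contDiff_cutoffAngle.comp (by fun_prop))).mul
    (Real.contDiff_sin.comp contDiff_cutoffAngle)

lemma bump_sq (t : ℝ) :
    bump t ^ 2 = Real.sin (cutoffAngle t) ^ 2 - Real.sin (cutoffAngle (t - 1)) ^ 2 := by
  rcases le_total t (3 / 10) with ht | ht
  · simp [bump, cutoffAngle_of_le (show t - 1 ≤ -7 / 10 by linarith)]
  · simp [bump, cutoffAngle_of_ge (show -3 / 10 ≤ t by linarith), Real.cos_sq']

lemma sum_bump_sub_intCast_sq {N : ℕ} {t : ℝ} (ht : |t| + 1 ≤ N) :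
    ∑ n ∈ Finset.Ico (-N : ℤ) N, bump (t - n) ^ 2 = 1 := by
  obtain ⟨hlo, hhi⟩ := abs_le.1 (le_sub_iff_add_le.2 ht)
  let s (n : ℤ) : ℝ := Real.sin (cutoffAngle (t - n)) ^ 2
  calc ∑ n ∈ Finset.Ico (-N : ℤ) N, bump (t - n) ^ 2
      = ∑ n ∈ Finset.Ico (-N : ℤ) N, (s n - s (n + 1)) := by
        simp only [s, bump_sq, Int.cast_add, Int.cast_one, sub_add_eq_sub_sub]
    _ = s (-N) - s N := Finset.sum_Ico_int_sub N s
    _ = 1 := by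
        have hleft : cutoffAngle (t - (-N : ℤ)) = Real.pi / 2 :=
          cutoffAngle_of_ge (by push_cast; linarith)
        have hright : cutoffAngle (t - (N : ℤ)) = 0 :=
          cutoffAngle_of_le (by push_cast; linarith)
        simp only [s, hleft, hright, Real.sin_pi_div_two, Real.sin_zero]
        norm_num

lemma tsupport_bump_subset : tsupport bump ⊆ Set.Icc (-7 / 10) (7 / 10) := by
  refine closure_minimal (fun t ht => ?_) isClosed_Icc
  contrapose! ht
  rw [Function.notMem_support, bump]
  rcases lt_or_ge t (-7 / 10) with hlo | hlo
  · rw [cutoffAngle_of_le hlo.le, Real.sin_zero, mul_zero]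
  · have hhi : 7 / 10 < t := lt_of_not_ge fun h => ht ⟨hlo, h⟩
    rw [cutoffAngle_of_ge (by linarith), Real.cos_pi_div_two, zero_mul]

lemma exists_deriv_bump_sq_le : ∃ C > 0, ∀ t, deriv bump t ^ 2 ≤ C := by
  have hsupp : HasCompactSupport bump :=
    isCompact_Icc.of_isClosed_subset (isClosed_tsupport _) tsupport_bump_subset
  have hcont : Continuous (deriv bump) := contDiff_bump.continuous_deriv (by simp)
  obtain ⟨C, hC⟩ := hcont.bounded_above_of_compact_support hsupp.deriv
  refine ⟨C ^ 2 + 1, by positivity, fun t => ?_⟩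
  calc deriv bump t ^ 2 = ‖deriv bump t‖ ^ 2 := (Real.norm_eq_abs _ ▸ sq_abs _).symm
    _ ≤ C ^ 2 := by gcongr; exact hC t
    _ ≤ C ^ 2 + 1 := by linarith

/-- The factor `2` counts the integers at distance less than one from `t`. -/
lemma sum_sub_intCast_le {g : ℝ → ℝ} {C : ℝ} (hg : ∀ t, 0 ≤ g t) (hgC : ∀ t, g t ≤ C)
    (hsupp : ∀ t, g t ≠ 0 → |t| < 1) (T : Finset ℤ) (t : ℝ) : ∑ n ∈ T, g (t - n) ≤ 2 * C := by
  have hmem : ∀ n : ℤ, g (t - n) ≠ 0 → n ∈ ({⌊t⌋, ⌊t⌋ + 1} : Finset ℤ) := by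
    intro n hn
    obtain ⟨hlo, hhi⟩ := abs_lt.1 (hsupp _ hn)
    have hle : n ≤ ⌊t⌋ + 1 := by
      have := Int.le_floor.2 (show ((n - 1 : ℤ) : ℝ) ≤ t by push_cast; linarith)
      linarith
    have hge : ⌊t⌋ ≤ n := Int.lt_add_one_iff.1 (Int.floor_lt.2 (by push_cast; linarith))
    rw [Finset.mem_insert, Finset.mem_singleton]
    lia
  calc ∑ n ∈ T, g (t - n) = ∑ n ∈ T.filter fun n : ℤ => g (t - n) ≠ 0, g (t - n) :=
        (Finset.sum_filter_ne_zero _).symm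
    _ ≤ ∑ n ∈ {⌊t⌋, ⌊t⌋ + 1}, g (t - n) :=
        Finset.sum_le_sum_of_subset_of_nonneg
          (fun n hn => hmem n (Finset.mem_filter.1 hn).2) fun n _ _ => hg _
    _ = g (t - ⌊t⌋) + g (t - (⌊t⌋ + 1 : ℤ)) := Finset.sum_pair (by simp)
    _ ≤ 2 * C := by linarith [hgC (t - ⌊t⌋), hgC (t - (⌊t⌋ + 1 : ℤ))]

lemma sum_deriv_bump_sub_intCast_sq_le {C : ℝ} (hC : ∀ t, deriv bump t ^ 2 ≤ C) (T : Finset ℤ)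
    (t : ℝ) : ∑ n ∈ T, deriv bump (t - n) ^ 2 ≤ 2 * C := by
  refine sum_sub_intCast_le (g := fun t => deriv bump t ^ 2) (fun t => sq_nonneg _) hC
    (fun t ht => ?_) T t
  obtain ⟨hlo, hhi⟩ := tsupport_bump_subset (support_deriv_subset (ne_zero_pow two_ne_zero ht))
  exact abs_lt.2 ⟨by linarith, by linarith⟩

/-! ### The partition of unity on cubes of side `3r/2` -/

lemma hasFDerivAt_bump_coord {ι : Type*} [Finite ι] (r c : ℝ) (i : ι) (x : ι → ℝ) :
    HasFDerivAt (fun y : ι → ℝ => bump (y i / r - c))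
      (deriv bump (x i / r - c) •
        r⁻¹ • ContinuousLinearMap.proj (R := ℝ) (φ := fun _ : ι => ℝ) i) x := by
  cases nonempty_fintype ι
  have hbump : HasDerivAt bump (deriv bump (x i / r - c)) (x i / r - c) :=
    (contDiff_bump.differentiable (by simp) _).hasDerivAt
  refine hbump.comp_hasFDerivAt x (f := fun y : ι → ℝ => y i / r - c) ?_
  simp only [div_eq_inv_mul]
  exact ((hasFDerivAt_apply i x).const_mul r⁻¹).sub_const c

section BoxCutoff

variable {ι : Type*} [Fintype ι]

/-- The cutoff function adapted to the cube of side `3 * r / 2` centred at `k * r`. -/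
noncomputable def boxCutoff (r : ℝ) (k : ι → ℤ) (x : ι → ℝ) : ℝ := ∏ i, bump (x i / r - k i)

variable (ι) in
/-- The lattice points with all coordinates in `[-N, N)`; they index the cutoffs needed to cover
the ball of radius `(N - 1) * r`. -/
noncomputable def latticeCube [DecidableEq ι] (N : ℕ) : Finset (ι → ℤ) :=
  Fintype.piFinset fun _ => Finset.Ico (-N : ℤ) N

lemma contDiff_boxCutoff (r : ℝ) (k : ι → ℤ) : ContDiff ℝ (⊤ : ℕ∞) (boxCutoff r k) :=
  contDiff_prod fun _ _ => contDiff_bump.comp (by fun_prop)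

lemma tsupport_boxCutoff_subset {r : ℝ} (hr : 0 < r) (k : ι → ℤ) :
    tsupport (boxCutoff r k) ⊆ Metric.ball (fun i => k i * r) (3 * r / 4) := by
  have hclosed : IsClosed {x : ι → ℝ | ∀ i, x i / r - k i ∈ Set.Icc (-7 / 10 : ℝ) (7 / 10)} := by
    simp only [Set.ofPred_forall]
    exact isClosed_iInter fun i => isClosed_Icc.preimage (by fun_prop)
  have hsupp : tsupport (boxCutoff r k) ⊆
      {x | ∀ i, x i / r - k i ∈ Set.Icc (-7 / 10 : ℝ) (7 / 10)} :=
    closure_minimal (fun x hx i => tsupport_bump_subset (subset_tsupport _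
      (Finset.prod_ne_zero_iff.1 hx i (Finset.mem_univ i)))) hclosed
  intro x hx
  rw [Metric.mem_ball, dist_pi_lt_iff (by positivity)]
  intro i
  obtain ⟨hlo, hhi⟩ := hsupp hx i
  calc dist (x i) (k i * r) = |x i / r - k i| * r := by
        rw [Real.dist_eq, ← abs_of_pos hr, ← abs_mul, abs_of_pos hr, sub_mul,
          div_mul_cancel₀ _ hr.ne']
    _ ≤ 7 / 10 * r := by gcongr; exact abs_le.2 ⟨by linarith, hhi⟩
    _ < 3 * r / 4 := by linarith

lemma sum_bump_coord_sq {r : ℝ} (hr : 0 < r) {N : ℕ} {x : ι → ℝ} (hx : ‖x‖ / r + 1 ≤ N) (i : ι) :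
    ∑ n ∈ Finset.Ico (-N : ℤ) N, bump (x i / r - n) ^ 2 = 1 := by
  refine sum_bump_sub_intCast_sq (le_trans ?_ hx)
  rw [abs_div, abs_of_pos hr]
  gcongr
  exact norm_le_pi_norm x i

variable [DecidableEq ι]

lemma sum_boxCutoff_sq {r : ℝ} (hr : 0 < r) {N : ℕ} {x : ι → ℝ} (hx : ‖x‖ / r + 1 ≤ N) :
    ∑ k ∈ latticeCube ι N, boxCutoff r k x ^ 2 = 1 := by
  simp only [boxCutoff, ← Finset.prod_pow]
  rw [latticeCube, ← Finset.prod_univ_sum (fun _ => Finset.Ico (-N : ℤ) N)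
    fun i n => bump (x i / r - n) ^ 2]
  exact Finset.prod_eq_one fun i _ => sum_bump_coord_sq hr hx i

lemma eventually_sum_boxCutoff_sq_eq_one {r : ℝ} (hr : 0 < r) {N : ℕ} {x : ι → ℝ}
    (hx : ‖x‖ / r + 1 < N) : ∀ᶠ y in 𝓝 x, ∑ k ∈ latticeCube ι N, boxCutoff r k y ^ 2 = 1 := by
  have hcont : Continuous fun y : ι → ℝ => ‖y‖ / r + 1 := by fun_prop
  filter_upwards [hcont.continuousAt.eventually_lt_const hx] with y hy
  exact sum_boxCutoff_sq hr hy.le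

lemma fderiv_boxCutoff_single (r : ℝ) (k : ι → ℤ) (x : ι → ℝ) (j : ι) :
    fderiv ℝ (boxCutoff r k) x (Pi.single j 1) =
      r⁻¹ * ∏ i, (if i = j then deriv bump else bump) (x i / r - k i) := by
  have hprod := HasFDerivAt.finsetProd (u := Finset.univ) fun i _ =>
    hasFDerivAt_bump_coord r (k i) i x
  have hrest : ∏ i ∈ Finset.univ.erase j, (if i = j then deriv bump else bump) (x i / r - k i) =
      ∏ i ∈ Finset.univ.erase j, bump (x i / r - k i) :=
    Finset.prod_congr rfl fun i hi => by rw [if_neg (Finset.ne_of_mem_erase hi)]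
  rw [← Finset.mul_prod_erase _ _ (Finset.mem_univ j), hrest, if_pos rfl]
  change fderiv ℝ (fun y => ∏ i, bump (y i / r - k i)) x _ = _
  rw [hprod.fderiv, sum_apply, Finset.sum_eq_single j]
  · simp only [smul_apply, ContinuousLinearMap.proj_apply, Pi.single_eq_same, smul_eq_mul]
    ring
  · intro i _ hij
    simp [hij]
  · simp

lemma sum_fderiv_boxCutoff_single_sq_le {C : ℝ} (hC : ∀ t, deriv bump t ^ 2 ≤ C) {r : ℝ}
    (hr : 0 < r) {N : ℕ} {x : ι → ℝ} (hx : ‖x‖ / r + 1 ≤ N) (j : ι) :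
    ∑ k ∈ latticeCube ι N, fderiv ℝ (boxCutoff r k) x (Pi.single j 1) ^ 2 ≤ 2 * C / r ^ 2 := by
  let f (i : ι) (n : ℤ) : ℝ := (if i = j then deriv bump else bump) (x i / r - n) ^ 2
  have hother : ∏ i ∈ Finset.univ.erase j, ∑ n ∈ Finset.Ico (-N : ℤ) N, f i n = 1 := by
    refine Finset.prod_eq_one fun i hi => ?_
    simp only [f, if_neg (Finset.ne_of_mem_erase hi)]
    exact sum_bump_coord_sq hr hx i
  calc ∑ k ∈ latticeCube ι N, fderiv ℝ (boxCutoff r k) x (Pi.single j 1) ^ 2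
      = (r ^ 2)⁻¹ * ∏ i, ∑ n ∈ Finset.Ico (-N : ℤ) N, f i n := by
        rw [Finset.prod_univ_sum, Finset.mul_sum, latticeCube]
        simp only [fderiv_boxCutoff_single, mul_pow, inv_pow, ← Finset.prod_pow, f]
    _ = (r ^ 2)⁻¹ * ∑ n ∈ Finset.Ico (-N : ℤ) N, deriv bump (x j / r - n) ^ 2 := by
        rw [← Finset.mul_prod_erase _ _ (Finset.mem_univ j), hother, mul_one]
        simp only [f, if_true]
    _ ≤ (r ^ 2)⁻¹ * (2 * C) := by
        gcongr
        exact sum_deriv_bump_sub_intCast_sq_le hC _ _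
    _ = 2 * C / r ^ 2 := (div_eq_inv_mul _ _).symm

end BoxCutoff

/-! ### The magnetic energy of test functions -/

/-- The integrand `∑_j |i∂_j u + A_j u|² + V|u|²` of the quadratic form `qform`. -/
noncomputable def magDensity (A : (Fin 2 → ℝ) → Fin 2 → ℝ) (V : (Fin 2 → ℝ) → ℝ)
    (u : (Fin 2 → ℝ) → ℂ) (x : Fin 2 → ℝ) : ℝ :=
  ∑ j, ‖magOp A j u x‖ ^ 2 + V x * ‖u x‖ ^ 2

lemma testFun.mono {B B' : Set (Fin 2 → ℝ)} {u : (Fin 2 → ℝ) → ℂ} (hu : testFun B u)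
    (hB : B ⊆ B') : testFun B' u :=
  ⟨hu.1, hu.2.1, hu.2.2.trans hB⟩

lemma testFun.ofReal_mul {B : Set (Fin 2 → ℝ)} {u : (Fin 2 → ℝ) → ℂ} (hu : testFun B u)
    {χ : (Fin 2 → ℝ) → ℝ} (hχ : ContDiff ℝ (⊤ : ℕ∞) χ) :
    testFun (B ∩ tsupport χ) fun x => (χ x : ℂ) * u x := by
  refine ⟨(Complex.ofRealCLM.contDiff.comp hχ).mul hu.1, hu.2.1.mul_left,
    Set.subset_inter (tsupport_mul_subset_right.trans hu.2.2) (closure_mono fun x hx => ?_)⟩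
  exact Complex.ofReal_ne_zero.1 (left_ne_zero_of_mul hx)

lemma exists_testFun_ne_zero {B : Set (Fin 2 → ℝ)} (hB : (interior B).Nonempty) :
    ∃ u, testFun B u ∧ u ≠ 0 := by
  obtain ⟨c, hc⟩ := hB
  obtain ⟨f, hsupp, hcomp, hsmooth, -, hfc⟩ := exists_contDiff_tsupport_subset (n := ⊤)
    (mem_interior_iff_mem_nhds.1 hc)
  refine ⟨fun x => (f x : ℂ), ⟨Complex.ofRealCLM.contDiff.comp hsmooth,
    hcomp.comp_left Complex.ofReal_zero, (closure_mono fun x hx => ?_).trans hsupp⟩, fun h => ?_⟩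
  · exact Complex.ofReal_ne_zero.1 hx
  · simpa [hfc] using congrFun h c

section Energy

variable {A : (Fin 2 → ℝ) → Fin 2 → ℝ} {V : (Fin 2 → ℝ) → ℝ} {B : Set (Fin 2 → ℝ)}
  {u : (Fin 2 → ℝ) → ℂ}

lemma magDensity_of_notMem_tsupport {x : Fin 2 → ℝ} (hx : x ∉ tsupport u) :
    magDensity A V u x = 0 := by
  have hderiv : fderiv ℝ u x = 0 :=
    Function.notMem_support.1 fun h => hx (support_fderiv_subset ℝ h)
  simp [magDensity, magOp, pd, hderiv, image_eq_zero_of_notMem_tsupport hx]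

lemma testFun.qform_eq_integral (hu : testFun B u) :
    qform B A V u = ∫ x, magDensity A V u x :=
  setIntegral_eq_integral_of_forall_compl_eq_zero fun _ hx =>
    magDensity_of_notMem_tsupport fun h => hx (hu.2.2 h)

lemma testFun.setIntegral_norm_sq (hu : testFun B u) :
    ∫ x in B, ‖u x‖ ^ 2 = ∫ x, ‖u x‖ ^ 2 :=
  setIntegral_eq_integral_of_forall_compl_eq_zero fun _ hx => by
    simp [image_eq_zero_of_notMem_tsupport fun h => hx (hu.2.2 h)]

lemma testFun.continuous_norm_sq (hu : testFun B u) : Continuous fun x => ‖u x‖ ^ 2 := by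
  have := hu.1.continuous
  fun_prop

lemma testFun.hasCompactSupport_norm_sq (hu : testFun B u) :
    HasCompactSupport fun x => ‖u x‖ ^ 2 :=
  hu.2.1.comp_left (g := fun z : ℂ => ‖z‖ ^ 2) (by simp)

lemma testFun.integrable_norm_sq (hu : testFun B u) : Integrable fun x => ‖u x‖ ^ 2 :=
  hu.continuous_norm_sq.integrable_of_hasCompactSupport hu.hasCompactSupport_norm_sq

lemma testFun.integral_norm_sq_pos (hu : testFun B u) (hne : u ≠ 0) : 0 < ∫ x, ‖u x‖ ^ 2 := by
  obtain ⟨x, hx⟩ := Function.ne_iff.1 hne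
  exact hu.continuous_norm_sq.integral_pos_of_hasCompactSupport_nonneg_nonzero
    hu.hasCompactSupport_norm_sq (fun _ => sq_nonneg _) (pow_ne_zero 2 (norm_ne_zero_iff.2 hx))

lemma testFun.integrable_magDensity (hA : Continuous A) (hV : Continuous V) (hu : testFun B u) :
    Integrable (magDensity A V u) := by
  have hcont : Continuous u := hu.1.continuous
  have hderiv (j : Fin 2) : Continuous (pd j u) :=
    (hu.1.continuous_fderiv (by simp)).clm_apply continuous_const
  refine Continuous.integrable_of_hasCompactSupport ?_
    (HasCompactSupport.intro hu.2.1 fun _ hx => magDensity_of_notMem_tsupport hx)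
  unfold magDensity magOp
  fun_prop

lemma magOp_ofReal_mul {χ : (Fin 2 → ℝ) → ℝ} {x : Fin 2 → ℝ} (hχ : DifferentiableAt ℝ χ x)
    (hu : DifferentiableAt ℝ u x) (j : Fin 2) :
    magOp A j (fun y => (χ y : ℂ) * u y) x =
      χ x * magOp A j u x + Complex.I * pdR j χ x * u x := by
  have hχ' : HasFDerivAt (fun y => (χ y : ℂ)) (Complex.ofRealCLM.comp (fderiv ℝ χ x)) x :=
    Complex.ofRealCLM.hasFDerivAt.comp x hχ.hasFDerivAt
  have hpd : pd j (fun y => (χ y : ℂ) * u y) x = χ x * pd j u x + pdR j χ x * u x := by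
    rw [pd, (hχ'.fun_mul hu.hasFDerivAt).fderiv]
    simp [pd, pdR, mul_comm]
  rw [magOp, magOp, hpd]
  ring

lemma magDensity_ofReal_const_mul (s : ℝ) {x : Fin 2 → ℝ} (hu : DifferentiableAt ℝ u x) :
    magDensity A V (fun y => (s : ℂ) * u y) x = s ^ 2 * magDensity A V u x := by
  have hop (j : Fin 2) : magOp A j (fun y => (s : ℂ) * u y) x = s * magOp A j u x := by
    simpa [pdR] using magOp_ofReal_mul (A := A) (differentiableAt_const (c := s)) hu j
  simp only [magDensity, hop, norm_mul, mul_pow, Complex.norm_real, Real.norm_eq_abs, sq_abs,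
    ← Finset.mul_sum]
  ring

/-! ### The variational characterization of `lam1` -/

lemma testFun.exists_normalized (hu : testFun B u) (hne : u ≠ 0) :
    ∃ v, testFun B v ∧ ∫ x in B, ‖v x‖ ^ 2 = 1 ∧
      (∫ x, magDensity A V u x) / ∫ x, ‖u x‖ ^ 2 = qform B A V v := by
  have hpos : 0 < ∫ x, ‖u x‖ ^ 2 := hu.integral_norm_sq_pos hne
  set s : ℝ := (√(∫ x, ‖u x‖ ^ 2))⁻¹
  have hs : s ^ 2 = (∫ x, ‖u x‖ ^ 2)⁻¹ := by rw [inv_pow, Real.sq_sqrt hpos.le]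
  have hv : testFun B fun x => (s : ℂ) * u x :=
    (hu.ofReal_mul (contDiff_const (c := s))).mono Set.inter_subset_left
  refine ⟨_, hv, ?_, ?_⟩
  · rw [hv.setIntegral_norm_sq]
    simp only [norm_mul, mul_pow, Complex.norm_real, Real.norm_eq_abs, sq_abs]
    rw [integral_const_mul, hs, inv_mul_cancel₀ hpos.ne']
  · rw [hv.qform_eq_integral]
    simp only [magDensity_ofReal_const_mul s (hu.1.differentiable (by simp) _)]
    rw [integral_const_mul, hs, div_eq_inv_mul]

lemma testFun.mul_integral_norm_sq_le (hA : Continuous A) (hV : Continuous V) {c : ℝ}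
    (hc : ∀ x ∈ B, c ≤ V x) (hu : testFun B u) :
    c * ∫ x, ‖u x‖ ^ 2 ≤ ∫ x, magDensity A V u x := by
  rw [← integral_const_mul]
  refine integral_mono (hu.integrable_norm_sq.const_mul c) (hu.integrable_magDensity hA hV)
    fun x => ?_
  by_cases hx : x ∈ tsupport u
  · calc c * ‖u x‖ ^ 2 ≤ V x * ‖u x‖ ^ 2 := by gcongr; exact hc x (hu.2.2 hx)
      _ ≤ magDensity A V u x := le_add_of_nonneg_left (by positivity)
  · simp [magDensity_of_notMem_tsupport hx, image_eq_zero_of_notMem_tsupport hx]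

lemma le_lam1 (hB : (interior B).Nonempty) {c : ℝ}
    (hc : ∀ u, testFun B u → c * ∫ x, ‖u x‖ ^ 2 ≤ ∫ x, magDensity A V u x) :
    c ≤ lam1 B A V := by
  obtain ⟨u, hu, hne⟩ := exists_testFun_ne_zero hB
  refine le_csInf ⟨_, hu.exists_normalized hne⟩ ?_
  rintro _ ⟨v, hv, hmass, rfl⟩
  rw [hv.setIntegral_norm_sq] at hmass
  simpa [hv.qform_eq_integral, hmass] using hc v hv

lemma lam1_mul_integral_norm_sq_le (hA : Continuous A) (hV : Continuous V)
    (hVB : BddBelow (V '' B)) (hu : testFun B u) :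
    lam1 B A V * ∫ x, ‖u x‖ ^ 2 ≤ ∫ x, magDensity A V u x := by
  rcases eq_or_ne u 0 with rfl | hne
  · simp [magDensity_of_notMem_tsupport]
  obtain ⟨c, hc⟩ := hVB
  rw [← le_div_iff₀ (hu.integral_norm_sq_pos hne)]
  refine csInf_le ⟨c, ?_⟩ (hu.exists_normalized hne)
  rintro _ ⟨v, hv, hmass, rfl⟩
  rw [hv.setIntegral_norm_sq] at hmass
  simpa [hv.qform_eq_integral, hmass] using
    hv.mul_integral_norm_sq_le hA hV fun x hx => hc (Set.mem_image_of_mem V hx)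

lemma lam1_anti (hA : Continuous A) (hV : Continuous V) {B' : Set (Fin 2 → ℝ)}
    (hVB : BddBelow (V '' B)) (hB' : (interior B').Nonempty) (hsub : B' ⊆ B) :
    lam1 B A V ≤ lam1 B' A V :=
  le_lam1 hB' fun _ hu => lam1_mul_integral_norm_sq_le hA hV hVB (hu.mono hsub)

end Energy

/-! ### IMS localization -/

lemma norm_ofReal_mul_add_I_mul_sq (a q : ℝ) (z w : ℂ) :
    ‖(a : ℂ) * z + Complex.I * q * w‖ ^ 2 =
      a ^ 2 * ‖z‖ ^ 2 + q ^ 2 * ‖w‖ ^ 2 + a * q * (2 * (z.im * w.re - z.re * w.im)) := by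
  simp only [Complex.sq_norm, Complex.normSq_apply, Complex.add_re, Complex.add_im,
    Complex.mul_re, Complex.mul_im, Complex.ofReal_re, Complex.ofReal_im, Complex.I_re,
    Complex.I_im]
  ring

lemma sum_smul_fderiv_eq_zero {κ E : Type*} [NormedAddCommGroup E] [NormedSpace ℝ E]
    {S : Finset κ} {χ : κ → E → ℝ} {x : E} (hχ : ∀ p ∈ S, DifferentiableAt ℝ (χ p) x)
    (hone : ∀ᶠ y in 𝓝 x, ∑ p ∈ S, χ p y ^ 2 = 1) : ∑ p ∈ S, χ p x • fderiv ℝ (χ p) x = 0 := by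
  have hsum : HasFDerivAt (fun y => ∑ p ∈ S, χ p y ^ 2)
      (∑ p ∈ S, (2 * χ p x) • fderiv ℝ (χ p) x) x :=
    HasFDerivAt.fun_sum fun p hp => by simpa using (hχ p hp).hasFDerivAt.pow 2
  have hconst : HasFDerivAt (fun y => ∑ p ∈ S, χ p y ^ 2) (0 : E →L[ℝ] ℝ) x :=
    (hasFDerivAt_const 1 x).congr_of_eventuallyEq hone
  have htwo := hsum.unique hconst
  simp only [mul_smul, ← Finset.smul_sum] at htwo
  exact (smul_eq_zero.1 htwo).resolve_left two_ne_zero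

section Localization

variable {A : (Fin 2 → ℝ) → Fin 2 → ℝ} {V : (Fin 2 → ℝ) → ℝ} {B : Set (Fin 2 → ℝ)}
  {u : (Fin 2 → ℝ) → ℂ} {κ : Type*} {S : Finset κ} {χ : κ → (Fin 2 → ℝ) → ℝ}

lemma sum_norm_ofReal_mul_sq {x : Fin 2 → ℝ} (hone : ∑ p ∈ S, χ p x ^ 2 = 1) :
    ∑ p ∈ S, ‖(χ p x : ℂ) * u x‖ ^ 2 = ‖u x‖ ^ 2 := by
  simp only [norm_mul, mul_pow, Complex.norm_real, Real.norm_eq_abs, sq_abs, ← Finset.sum_mul,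
    hone, one_mul]

lemma sum_norm_magOp_ofReal_mul_sq {x : Fin 2 → ℝ} (hχ : ∀ p ∈ S, DifferentiableAt ℝ (χ p) x)
    (hu : DifferentiableAt ℝ u x) (hone : ∀ᶠ y in 𝓝 x, ∑ p ∈ S, χ p y ^ 2 = 1) (j : Fin 2) :
    ∑ p ∈ S, ‖magOp A j (fun y => (χ p y : ℂ) * u y) x‖ ^ 2 =
      ‖magOp A j u x‖ ^ 2 + (∑ p ∈ S, pdR j (χ p) x ^ 2) * ‖u x‖ ^ 2 := by
  have hcross : ∑ p ∈ S, χ p x * pdR j (χ p) x = 0 := by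
    simpa [pdR] using congrArg (· (Pi.single j 1)) (sum_smul_fderiv_eq_zero hχ hone)
  rw [Finset.sum_congr rfl fun p hp => by
    rw [magOp_ofReal_mul (hχ p hp) hu, norm_ofReal_mul_add_I_mul_sq]]
  simp only [Finset.sum_add_distrib, ← Finset.sum_mul, hcross, hone.self_of_nhds, one_mul,
    zero_mul, add_zero]

lemma sum_magDensity_ofReal_mul {x : Fin 2 → ℝ} (hχ : ∀ p ∈ S, DifferentiableAt ℝ (χ p) x)
    (hu : DifferentiableAt ℝ u x) (hone : ∀ᶠ y in 𝓝 x, ∑ p ∈ S, χ p y ^ 2 = 1) :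
    ∑ p ∈ S, magDensity A V (fun y => (χ p y : ℂ) * u y) x =
      magDensity A V u x + (∑ j, ∑ p ∈ S, pdR j (χ p) x ^ 2) * ‖u x‖ ^ 2 := by
  simp only [magDensity, Finset.sum_add_distrib, ← Finset.mul_sum]
  rw [Finset.sum_comm, sum_norm_ofReal_mul_sq hone.self_of_nhds]
  simp only [sum_norm_magOp_ofReal_mul_sq hχ hu hone, Finset.sum_add_distrib, Finset.sum_mul]
  ring

lemma sum_magDensity_ofReal_mul_le (hχ : ∀ p ∈ S, Differentiable ℝ (χ p))
    (hu : Differentiable ℝ u)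
    (hone : ∀ x ∈ tsupport u, ∀ᶠ y in 𝓝 x, ∑ p ∈ S, χ p y ^ 2 = 1) {K : ℝ}
    (hgrad : ∀ x ∈ tsupport u, ∑ j, ∑ p ∈ S, pdR j (χ p) x ^ 2 ≤ K) (x : Fin 2 → ℝ) :
    ∑ p ∈ S, magDensity A V (fun y => (χ p y : ℂ) * u y) x ≤
      magDensity A V u x + K * ‖u x‖ ^ 2 := by
  by_cases hx : x ∈ tsupport u
  · rw [sum_magDensity_ofReal_mul (fun p hp => hχ p hp x) (hu x) (hone x hx)]
    gcongr
    exact hgrad x hx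
  · rw [Finset.sum_eq_zero fun p _ =>
      magDensity_of_notMem_tsupport fun h => hx (tsupport_mul_subset_right h)]
    simp [magDensity_of_notMem_tsupport hx, image_eq_zero_of_notMem_tsupport hx]

lemma testFun.sum_integral_norm_ofReal_mul_sq (hχ : ∀ p ∈ S, ContDiff ℝ (⊤ : ℕ∞) (χ p))
    (hu : testFun B u) (hone : ∀ x ∈ tsupport u, ∑ p ∈ S, χ p x ^ 2 = 1) :
    ∑ p ∈ S, ∫ x, ‖(χ p x : ℂ) * u x‖ ^ 2 = ∫ x, ‖u x‖ ^ 2 := by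
  rw [← integral_finsetSum _ fun p hp => (hu.ofReal_mul (hχ p hp)).integrable_norm_sq]
  refine integral_congr_ae (.of_forall fun x => ?_)
  by_cases hx : x ∈ tsupport u
  · exact sum_norm_ofReal_mul_sq (hone x hx)
  · simp [image_eq_zero_of_notMem_tsupport hx]

lemma testFun.sub_mul_integral_norm_sq_le (hA : Continuous A) (hV : Continuous V)
    (hχ : ∀ p ∈ S, ContDiff ℝ (⊤ : ℕ∞) (χ p)) (hu : testFun B u)
    (hone : ∀ x ∈ tsupport u, ∀ᶠ y in 𝓝 x, ∑ p ∈ S, χ p y ^ 2 = 1) {c K : ℝ}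
    (hgrad : ∀ x ∈ tsupport u, ∑ j, ∑ p ∈ S, pdR j (χ p) x ^ 2 ≤ K)
    (hloc : ∀ p ∈ S, c * ∫ x, ‖(χ p x : ℂ) * u x‖ ^ 2 ≤
      ∫ x, magDensity A V (fun y => (χ p y : ℂ) * u y) x) :
    (c - K) * ∫ x, ‖u x‖ ^ 2 ≤ ∫ x, magDensity A V u x := by
  have hdens : ∀ p ∈ S, Integrable (magDensity A V fun y => (χ p y : ℂ) * u y) := fun p hp =>
    (hu.ofReal_mul (hχ p hp)).integrable_magDensity hA hV
  have hdens_u : Integrable (magDensity A V u) := hu.integrable_magDensity hA hV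
  have hmass_u : Integrable fun x => K * ‖u x‖ ^ 2 := hu.integrable_norm_sq.const_mul K
  have hlocalized : c * ∫ x, ‖u x‖ ^ 2 ≤ (∫ x, magDensity A V u x) + K * ∫ x, ‖u x‖ ^ 2 := by
    calc c * ∫ x, ‖u x‖ ^ 2 = ∑ p ∈ S, c * ∫ x, ‖(χ p x : ℂ) * u x‖ ^ 2 := by
          rw [← Finset.mul_sum,
            hu.sum_integral_norm_ofReal_mul_sq hχ fun x hx => (hone x hx).self_of_nhds]
      _ ≤ ∑ p ∈ S, ∫ x, magDensity A V (fun y => (χ p y : ℂ) * u y) x := Finset.sum_le_sum hloc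
      _ = ∫ x, ∑ p ∈ S, magDensity A V (fun y => (χ p y : ℂ) * u y) x :=
          (integral_finsetSum S hdens).symm
      _ ≤ ∫ x, (magDensity A V u x + K * ‖u x‖ ^ 2) :=
          integral_mono (integrable_finsetSum S hdens) (hdens_u.add hmass_u)
            (sum_magDensity_ofReal_mul_le (fun p hp => (hχ p hp).differentiable (by simp))
              (hu.1.differentiable (by simp)) hone hgrad)
      _ = (∫ x, magDensity A V u x) + K * ∫ x, ‖u x‖ ^ 2 := by
          rw [integral_add hdens_u hmass_u, integral_const_mul]
  linarith

end Localization

/-! ### Comparison with the boxes of a lattice -/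

lemma box_eq_ball (c : Fin 2 → ℝ) (L : ℝ) : box c L = Metric.ball c (L / 2) := by
  rw [ball_pi']
  ext y
  simp [box, Real.dist_eq]

lemma isOpen_box (c : Fin 2 → ℝ) (L : ℝ) : IsOpen (box c L) :=
  box_eq_ball c L ▸ Metric.isOpen_ball

lemma isBounded_box (c : Fin 2 → ℝ) (L : ℝ) : Bornology.IsBounded (box c L) :=
  box_eq_ball c L ▸ Metric.isBounded_ball

lemma nonempty_interior_box (c : Fin 2 → ℝ) {L : ℝ} (hL : 0 < L) :
    (interior (box c L)).Nonempty := by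
  rw [(isOpen_box c L).interior_eq, box_eq_ball]
  exact Metric.nonempty_ball.2 (half_pos hL)

lemma bddBelow_image_of_isBounded {E : Type*} [PseudoMetricSpace E] [ProperSpace E] {V : E → ℝ}
    (hV : Continuous V) {Ω : Set E} (hΩ : Bornology.IsBounded Ω) : BddBelow (V '' Ω) :=
  (hΩ.isCompact_closure.bddBelow_image hV.continuousOn).mono (Set.image_mono subset_closure)

section Lattice

variable {A : (Fin 2 → ℝ) → Fin 2 → ℝ} {V : (Fin 2 → ℝ) → ℝ} {Ω : Set (Fin 2 → ℝ)}

lemma box_subset_cthickening {c : Fin 2 → ℝ} {L : ℝ} (h : (box c L ∩ Ω).Nonempty) :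
    box c L ⊆ Metric.cthickening L Ω := by
  obtain ⟨y, hy, hyΩ⟩ := h
  rw [box_eq_ball] at hy ⊢
  intro x hx
  refine Metric.mem_cthickening_of_dist_le x y L Ω hyΩ ?_
  linarith [dist_triangle_right x y c, Metric.mem_ball.1 hx, Metric.mem_ball.1 hy]

lemma bddBelow_lam1_boxes (hA : Continuous A) (hV : Continuous V) (hΩ : Bornology.IsBounded Ω)
    {L : ℝ} (hL : 0 < L) {κ : Type*} (c : κ → Fin 2 → ℝ) :
    BddBelow ((fun k => lam1 (box (c k) L) A V) '' {k | (box (c k) L ∩ Ω).Nonempty}) := by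
  have hVb := bddBelow_image_of_isBounded hV (hΩ.cthickening (δ := L))
  refine ⟨lam1 (Metric.cthickening L Ω) A V, ?_⟩
  rintro _ ⟨k, hk, rfl⟩
  exact lam1_anti hA hV hVb (nonempty_interior_box _ hL) (box_subset_cthickening hk)

lemma sInf_lam1_boxes_mul_le (hA : Continuous A) (hV : Continuous V) (hΩ : Bornology.IsBounded Ω)
    {L : ℝ} (hL : 0 < L) {κ : Type*} (c : κ → Fin 2 → ℝ) (k : κ) {v : (Fin 2 → ℝ) → ℂ}
    (hv : testFun (Ω ∩ box (c k) L) v) :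
    sInf ((fun k => lam1 (box (c k) L) A V) '' {k | (box (c k) L ∩ Ω).Nonempty}) *
      ∫ x, ‖v x‖ ^ 2 ≤ ∫ x, magDensity A V v x := by
  rcases eq_or_ne v 0 with rfl | hne
  · simp [magDensity_of_notMem_tsupport]
  obtain ⟨x, hx⟩ := Function.ne_iff.1 hne
  have hmeets : (box (c k) L ∩ Ω).Nonempty := ⟨x, (hv.2.2 (subset_tsupport _ hx)).symm⟩
  calc _ ≤ lam1 (box (c k) L) A V * ∫ x, ‖v x‖ ^ 2 := by
        gcongr
        exact csInf_le (bddBelow_lam1_boxes hA hV hΩ hL c) (Set.mem_image_of_mem _ hmeets)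
    _ ≤ ∫ x, magDensity A V v x := lam1_mul_integral_norm_sq_le hA hV
        (bddBelow_image_of_isBounded hV (isBounded_box _ _)) (hv.mono Set.inter_subset_right)

lemma sInf_lam1_boxes_sub_le_lam1 {C : ℝ} (hC : ∀ t, deriv bump t ^ 2 ≤ C) (hA : Continuous A)
    (hV : Continuous V) (hΩ : Bornology.IsBounded Ω) (hinterior : (interior Ω).Nonempty) {r : ℝ}
    (hr : 0 < r) :
    sInf ((fun k : Fin 2 → ℤ => lam1 (box (fun j => (k j : ℝ) * r) (3 * r / 2)) A V) ''
        {k | (box (fun j => (k j : ℝ) * r) (3 * r / 2) ∩ Ω).Nonempty}) - 4 * C / r ^ 2 ≤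
      lam1 Ω A V := by
  refine le_lam1 hinterior fun u hu => ?_
  obtain ⟨R, hR⟩ := hΩ.exists_norm_le
  obtain ⟨N, hN⟩ := exists_nat_gt (R / r + 1)
  have hcover : ∀ x ∈ tsupport u, ‖x‖ / r + 1 < N := fun x hx =>
    lt_of_le_of_lt (by gcongr; exact hR x (hu.2.2 hx)) hN
  refine hu.sub_mul_integral_norm_sq_le (S := latticeCube (Fin 2) N) (χ := boxCutoff r) hA hV
    (fun k _ => contDiff_boxCutoff r k)
    (fun x hx => eventually_sum_boxCutoff_sq_eq_one hr (hcover x hx)) (fun x hx => ?_)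
    fun k _ => ?_
  · calc ∑ j, ∑ k ∈ latticeCube (Fin 2) N, pdR j (boxCutoff r k) x ^ 2
        ≤ ∑ _j : Fin 2, 2 * C / r ^ 2 := Finset.sum_le_sum fun j _ =>
          sum_fderiv_boxCutoff_single_sq_le hC hr (hcover x hx).le j
      _ = 4 * C / r ^ 2 := by rw [Fin.sum_univ_two]; ring
  · refine sInf_lam1_boxes_mul_le hA hV hΩ (by positivity) _ k
      ((hu.ofReal_mul (contDiff_boxCutoff r k)).mono (Set.inter_subset_inter_right _ ?_))
    rw [box_eq_ball, show 3 * r / 2 / 2 = 3 * r / 4 by ring]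
    exact tsupport_boxCutoff_subset hr k

end Lattice

theorem lam1_boxes_comparison_general :
    ∃ K > (0 : ℝ), ∀ (A : (Fin 2 → ℝ) → Fin 2 → ℝ) (V : (Fin 2 → ℝ) → ℝ),
      Continuous A → Continuous V → ∀ (Ω : Set (Fin 2 → ℝ)) (r : ℝ),
        Bornology.IsBounded Ω → 0 < r → (∃ k : Fin 2 → ℤ, box (fun j => (k j : ℝ) * r) r ⊆ Ω) →
          sInf ((fun k : Fin 2 → ℤ =>
                lam1 (box (fun j => (k j : ℝ) * r) (3 * r / 2)) A V) ''
              {k | (box (fun j => (k j : ℝ) * r) (3 * r / 2) ∩ Ω).Nonempty})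
              - K / r ^ 2
            ≤ lam1 Ω A V ∧
          lam1 Ω A V
            ≤ sInf ((fun k : Fin 2 → ℤ =>
                lam1 (box (fun j => (k j : ℝ) * r) r) A V) ''
              {k | box (fun j => (k j : ℝ) * r) r ⊆ Ω}) := by
  obtain ⟨C, hC0, hC⟩ := exists_deriv_bump_sq_le
  refine ⟨4 * C, by positivity, fun A V hA hV Ω r hΩ hr ⟨k₀, hk₀⟩ => ⟨?_, ?_⟩⟩
  · have hinterior : (interior Ω).Nonempty :=
      (nonempty_interior_box _ hr).mono (interior_mono hk₀)
    exact sInf_lam1_boxes_sub_le_lam1 hC hA hV hΩ hinterior hr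
  · refine le_csInf ⟨_, k₀, hk₀, rfl⟩ ?_
    rintro _ ⟨k, hk, rfl⟩
    exact lam1_anti hA hV (bddBelow_image_of_isBounded hV hΩ) (nonempty_interior_box _ hr) hk

/-- Eigenvalue comparison between a large box and sub-boxes: there is `K > 0`
such that for continuous `A`, `V`, `L ≥ 1` and `0 < r < L`,
`min_{k ∈ N₂} λ₁^{B_{kr,3r/2}}(A,V) − K/r² ≤ λ₁^{B_{0,L}}(A,V) ≤ min_{k ∈ N₁} λ₁^{B_{kr,r}}(A,V)`. -/
theorem lam1_boxes_comparison :
    ∃ K > (0 : ℝ), ∀ (A : (Fin 2 → ℝ) → Fin 2 → ℝ) (V : (Fin 2 → ℝ) → ℝ),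
      Continuous A → Continuous V → ∀ L r : ℝ, 1 ≤ L → 0 < r → r < L →
        sInf ((fun k : Fin 2 → ℤ =>
              lam1 (box (fun j => (k j : ℝ) * r) (3 * r / 2)) A V) ''
            {k | (box (fun j => (k j : ℝ) * r) (3 * r / 2) ∩ box 0 L).Nonempty})
            - K / r ^ 2
          ≤ lam1 (box 0 L) A V ∧
        lam1 (box 0 L) A V
          ≤ sInf ((fun k : Fin 2 → ℤ =>
              lam1 (box (fun j => (k j : ℝ) * r) r) A V) ''
            {k | box (fun j => (k j : ℝ) * r) r ⊆ box 0 L}) := by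
  obtain ⟨K, hK, hcomp⟩ := lam1_boxes_comparison_general
  exact ⟨K, hK, fun A V hA hV L r _ hr hrL => hcomp A V hA hV (box 0 L) r (isBounded_box 0 L) hr
    ⟨0, fun y hy j => by simpa using (hy j).trans (by linarith)⟩⟩
end
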